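/- Let E be a unital idempotent CPTP map on d×d complex matrices and let σ be a positive definite d×d matrix with E(σ) = σ. Then E(σ^t) = σ^t for every real number t, where σ^t is defined via the functional calculus. In particular, if σ is a fixed point of E then so is every real matrix power of σ. -/

import Mathlib

open Matrix
open scoped ComplexOrder

/-- Matrix power `A ^ t` for real `t`, via the continuous functional calculus
(applying `x ↦ x ^ t` to the eigenvalues of a Hermitian matrix `A`). -/
noncomputable def mpow {d : ℕ} (A : Matrix (Fin d) (Fin d) ℂ) (t : ℝ) :
    Matrix (Fin d) (Fin d) ℂ :=
  cfc (fun x : ℝ => x ^ t) A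

/-- The Tsallis-based relative entropy
`S̃_a(ρ|σ) = ((Tr (ρ^a σ^(1-a)))^(1/a) - 1) / (a - 1)`. -/
noncomputable def tsallis {d : ℕ} (a : ℝ) (ρ σ : Matrix (Fin d) (Fin d) ℂ) : ℝ :=
  ((((mpow ρ a * mpow σ (1 - a)).trace).re) ^ (1 / a) - 1) / (a - 1)

/-!
Every fixed point `X` of a unital trace-preserving map `E X = ∑ i, K i * X * (K i)ᴴ` commutes with
all `K i`: the sum of the positive semidefinite matrices `C i * (C i)ᴴ`, where
`C i = K i * X - X * K i`, is `E (X * Xᴴ) - X * Xᴴ`, which has trace zero, so every `C i` vanishes.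
Whatever commutes with all `K i`, in particular any function of a Hermitian fixed point, is fixed by
`E` in turn.
-/

section KrausMap

variable {ι m n R : Type*} [Fintype ι] [Fintype n]

/-- The completely positive map `X ↦ ∑ i, K i * X * (K i)ᴴ` with Kraus operators `K`. The operators
may be rectangular. -/
def krausMap [CommSemiring R] [StarRing R] (K : ι → Matrix m n R) :
    Matrix n n R →ₗ[R] Matrix m m R where
  toFun X := ∑ i, K i * X * (K i)ᴴ
  map_add' X Y := by simp only [Matrix.mul_add, Matrix.add_mul, Finset.sum_add_distrib]
  map_smul' c X := by
    simp only [Matrix.mul_smul, Matrix.smul_mul, Finset.smul_sum, RingHom.id_apply]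

section CommSemiring

variable [CommSemiring R] [StarRing R]

theorem krausMap_apply (K : ι → Matrix m n R) (X : Matrix n n R) :
    krausMap K X = ∑ i, K i * X * (K i)ᴴ :=
  rfl

theorem krausMap_one [DecidableEq n] (K : ι → Matrix m n R) :
    krausMap K 1 = ∑ i, K i * (K i)ᴴ := by
  simp only [krausMap_apply, Matrix.mul_one]

theorem krausMap_conjTranspose (K : ι → Matrix m n R) (X : Matrix n n R) :
    krausMap K Xᴴ = (krausMap K X)ᴴ := by
  simp only [krausMap_apply, conjTranspose_sum, conjTranspose_mul, conjTranspose_conjTranspose,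
    Matrix.mul_assoc]

theorem trace_krausMap [Fintype m] (K : ι → Matrix m n R) (X : Matrix n n R) :
    (krausMap K X).trace = ((∑ i, (K i)ᴴ * K i) * X).trace := by
  simp only [krausMap_apply, Matrix.sum_mul, trace_sum]
  exact Finset.sum_congr rfl fun i _ => trace_mul_cycle (K i) X (K i)ᴴ

theorem krausMap_eq_self_of_forall_commute [DecidableEq n] {K : ι → Matrix n n R}
    (hUnital : krausMap K 1 = 1) {X : Matrix n n R} (hX : ∀ i, Commute X (K i)) :
    krausMap K X = X :=
  calc krausMap K X = ∑ i, X * (K i * (K i)ᴴ) := by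
        simp only [krausMap_apply, ← (hX _).eq, Matrix.mul_assoc]
    _ = X := by rw [← Finset.mul_sum, ← krausMap_one, hUnital, mul_one]

end CommSemiring

section CommRing

variable [CommRing R] [StarRing R] [DecidableEq n]

theorem sum_commutator_mul_conjTranspose (K : ι → Matrix n n R) (X : Matrix n n R) :
    ∑ i, (K i * X - X * K i) * (K i * X - X * K i)ᴴ =
      krausMap K (X * Xᴴ) - krausMap K X * Xᴴ - X * krausMap K Xᴴ + X * krausMap K 1 * Xᴴ := by
  simp only [krausMap_apply, Finset.sum_mul, Finset.mul_sum, ← Finset.sum_sub_distrib,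
    ← Finset.sum_add_distrib, conjTranspose_sub, conjTranspose_mul]
  exact Finset.sum_congr rfl fun i _ => by noncomm_ring

theorem sum_commutator_mul_conjTranspose_of_krausMap_eq_self {K : ι → Matrix n n R}
    (hUnital : krausMap K 1 = 1) {X : Matrix n n R} (hX : krausMap K X = X) :
    ∑ i, (K i * X - X * K i) * (K i * X - X * K i)ᴴ = krausMap K (X * Xᴴ) - X * Xᴴ := by
  rw [sum_commutator_mul_conjTranspose, krausMap_conjTranspose, hUnital, hX, mul_one,
    sub_add_cancel]

theorem commute_of_krausMap_eq_self [PartialOrder R] [StarOrderedRing R] [NoZeroDivisors R]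
    {K : ι → Matrix n n R} (hTrace : ∑ i, (K i)ᴴ * K i = 1) (hUnital : krausMap K 1 = 1)
    {X : Matrix n n R} (hX : krausMap K X = X) (i : ι) : Commute X (K i) := by
  let C : ι → Matrix n n R := fun i => K i * X - X * K i
  have trace_nonneg (j : ι) : 0 ≤ (C j * (C j)ᴴ).trace :=
    (posSemidef_self_mul_conjTranspose (C j)).trace_nonneg
  have sum_trace : ∑ j, (C j * (C j)ᴴ).trace = 0 := by
    rw [← trace_sum, sum_commutator_mul_conjTranspose_of_krausMap_eq_self hUnital hX, trace_sub,
      trace_krausMap, hTrace, one_mul, sub_self]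
  have trace_eq_zero : (C i * (C i)ᴴ).trace = 0 :=
    (Finset.sum_eq_zero_iff_of_nonneg fun j _ => trace_nonneg j).1 sum_trace i (Finset.mem_univ i)
  exact (sub_eq_zero.1 (trace_mul_conjTranspose_self_eq_zero_iff.1 trace_eq_zero)).symm

end CommRing

theorem stmt_5_general {𝕜 : Type*} [RCLike 𝕜] [DecidableEq n] {K : ι → Matrix n n 𝕜}
    (hTrace : ∑ i, (K i)ᴴ * K i = 1) (hUnital : krausMap K 1 = 1)
    {σ : Matrix n n 𝕜} (hσ : σ.IsHermitian) (hfix : krausMap K σ = σ) (f : ℝ → ℝ) :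
    krausMap K (cfc f σ) = cfc f σ :=
  krausMap_eq_self_of_forall_commute hUnital fun i =>
    hσ.isSelfAdjoint.commute_cfc (commute_of_krausMap_eq_self hTrace hUnital hfix i) f

end KrausMap

/-- For a unital idempotent CPTP map `E` and a positive definite matrix `σ` with
`E(σ) = σ`, every real matrix power of `σ` is also a fixed point: `E(σ^t) = σ^t`
for all real `t`. -/
theorem stmt_5 {d : ℕ}
    (E : Matrix (Fin d) (Fin d) ℂ →ₗ[ℂ] Matrix (Fin d) (Fin d) ℂ)
    (hKraus : ∃ (n : ℕ) (K : Fin n → Matrix (Fin d) (Fin d) ℂ),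
      (∀ X, E X = ∑ i, K i * X * (K i)ᴴ) ∧ ∑ i, (K i)ᴴ * K i = 1)
    (hUnital : E 1 = 1)
    (hIdem : ∀ X, E (E X) = E X)
    (σ : Matrix (Fin d) (Fin d) ℂ) (hσ : σ.PosDef) (hfix : E σ = σ) :
    ∀ t : ℝ, E (mpow σ t) = mpow σ t := by
  obtain ⟨n, K, hE, hTrace⟩ := hKraus
  obtain rfl : E = krausMap K := LinearMap.ext hE
  exact fun t => stmt_5_general hTrace hUnital hσ.isHermitian hfix (· ^ t)
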